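/- arXiv:2005.00291 — 2 statements merged into one kernel-verified Lean document; each statement's English description precedes it below -/
import Mathlib

section
/- Let ε > 0, T > 0 and 0 < ρ̲ ≤ ρ̄ be real numbers. Let u : [0,T] × ℝ³ → ℝ³ be continuous and ℤ³-periodic in the space variable, with all spatial partial derivatives up to order two existing and continuous on [0,T] × ℝ³. Let ρ : [0,T] × ℝ³ → ℝ be ℤ³-periodic in the space variable, continuously differentiable in t and twice continuously differentiable in x, and suppose it satisfies the viscous continuity equation ∂ₜρ(t,x) + div(ρ(t,x) u(t,x)) = ε Δρ(t,x) for all (t,x) ∈ (0,T) × ℝ³, together with ρ̲ ≤ ρ(0,x) ≤ ρ̄ for all x ∈ ℝ³. Then for every (t,x) ∈ [0,T] × ℝ³ one has ρ̲ · exp( − ∫₀ᵗ sup_{y∈ℝ³} |div u(s,y)| ds ) ≤ ρ(t,x) ≤ ρ̄ · exp( ∫₀ᵗ sup_{y∈ℝ³} |div u(s,y)| ds ). -/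
/-!
Periodicity makes suprema over space attained, so the parabolic maximum principle applies without
conditions at infinity. At a spatial maximum of a subsolution `w` one has `∇w = 0` and `Δw ≤ 0`,
so the equation leaves `∂ₜw ≤ -w div u`, which is at most `M w` where `w > 0` and `|div u| ≤ M`.
Then `e^{-(M+1)t} w` cannot have a positive maximum at a positive time, hence `w ≤ 0` as soon as
`w(0,·) ≤ 0`.

The equation is linear, so both bounds are instances of this: put `F t = ∫₀ᵗ sup |div u|`. The
functions of time alone `b = C e^{σF}` with `σ C = |C|` satisfy `b' = |b| sup |div u| ≥ -b div u`,
hence are supersolutions, and subtracting one from a subsolution leaves a subsolution. The upper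
bound compares `ρ` with `ρ̄ e^F`, the lower one compares `-ρ` with `-ρ̲ e^{-F}`.
-/

open MeasureTheory Set Filter BigOperators

/-- The `i`-th spatial partial derivative of a scalar field on `ℝ³`. -/
noncomputable def pd (i : Fin 3) (g : (Fin 3 → ℝ) → ℝ) (x : Fin 3 → ℝ) : ℝ :=
  fderiv ℝ g x (Pi.single i 1)

/-- Divergence of a vector field on `ℝ³`. -/
noncomputable def divg (v : (Fin 3 → ℝ) → (Fin 3 → ℝ)) (x : Fin 3 → ℝ) : ℝ :=
  ∑ i, pd i (fun y => v y i) x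

/-- Laplacian of a scalar field on `ℝ³`. -/
noncomputable def lap (g : (Fin 3 → ℝ) → ℝ) (x : Fin 3 → ℝ) : ℝ :=
  ∑ i, pd i (pd i g) x

/-- `ℤ³`-periodicity: the model for functions on the torus `𝕋³`. -/
def PeriodicSpace {α : Type*} (f : (Fin 3 → ℝ) → α) : Prop :=
  ∀ (x : Fin 3 → ℝ) (z : Fin 3 → ℤ), f (x + fun i => (z i : ℝ)) = f x

/-- A velocity field on `[0,T] × ℝ³`: continuous, `ℤ³`-periodic in space, with all
spatial partial derivatives up to order two existing and continuous on `[0,T] × ℝ³`. -/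
structure RegVel (T : ℝ) (u : ℝ → (Fin 3 → ℝ) → (Fin 3 → ℝ)) : Prop where
  periodic : ∀ t ∈ Set.Icc (0:ℝ) T, PeriodicSpace (u t)
  smoothSpace : ∀ t ∈ Set.Icc (0:ℝ) T, ContDiff ℝ 2 (u t)
  cont0 : ContinuousOn (fun p : ℝ × (Fin 3 → ℝ) => u p.1 p.2) (Set.Icc 0 T ×ˢ Set.univ)
  cont1 : ∀ i j, ContinuousOn (fun p : ℝ × (Fin 3 → ℝ) => pd i (fun y => u p.1 y j) p.2)
      (Set.Icc 0 T ×ˢ Set.univ)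
  cont2 : ∀ i j k, ContinuousOn
      (fun p : ℝ × (Fin 3 → ℝ) => pd i (pd j (fun y => u p.1 y k)) p.2)
      (Set.Icc 0 T ×ˢ Set.univ)

/-- A density on `[0,T] × ℝ³`: `ℤ³`-periodic in space, continuously differentiable in `t`,
twice continuously differentiable in `x`, all derivatives continuous on `[0,T] × ℝ³`. -/
structure RegDens (T : ℝ) (ρ : ℝ → (Fin 3 → ℝ) → ℝ) : Prop where
  periodic : ∀ t ∈ Set.Icc (0:ℝ) T, PeriodicSpace (ρ t)
  smoothSpace : ∀ t ∈ Set.Icc (0:ℝ) T, ContDiff ℝ 2 (ρ t)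
  diffTime : ∀ x, ∀ t ∈ Set.Icc (0:ℝ) T, DifferentiableAt ℝ (fun s => ρ s x) t
  cont0 : ContinuousOn (fun p : ℝ × (Fin 3 → ℝ) => ρ p.1 p.2) (Set.Icc 0 T ×ˢ Set.univ)
  contT : ContinuousOn (fun p : ℝ × (Fin 3 → ℝ) => deriv (fun s => ρ s p.2) p.1)
      (Set.Icc 0 T ×ˢ Set.univ)
  cont1 : ∀ i, ContinuousOn (fun p : ℝ × (Fin 3 → ℝ) => pd i (ρ p.1) p.2)
      (Set.Icc 0 T ×ˢ Set.univ)
  cont2 : ∀ i j, ContinuousOn (fun p : ℝ × (Fin 3 → ℝ) => pd i (pd j (ρ p.1)) p.2)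
      (Set.Icc 0 T ×ˢ Set.univ)

/-- The viscous continuity equation `∂ₜρ + div(ρu) = ε Δρ`, pointwise on `(0,T) × ℝ³`. -/
def SolvesViscousContinuity (ε T : ℝ) (ρ : ℝ → (Fin 3 → ℝ) → ℝ)
    (u : ℝ → (Fin 3 → ℝ) → (Fin 3 → ℝ)) : Prop :=
  ∀ t ∈ Set.Ioo (0:ℝ) T, ∀ x : Fin 3 → ℝ,
    deriv (fun s => ρ s x) t + divg (fun y => ρ t y • u t y) x = ε * lap (ρ t) x

/-! ### Necessary conditions at a maximum -/

lemma deriv_nonneg_of_isMaxOn_Icc {f : ℝ → ℝ} {f' a b : ℝ} (hab : a < b) (hf : HasDerivAt f f' b)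
    (hmax : IsMaxOn f (Icc a b) b) : 0 ≤ f' := by
  have hcone : a - b ∈ posTangentConeAt (Icc a b) b :=
    mem_posTangentConeAt_of_segment_subset (by simp [segment_symm, segment_eq_Icc hab.le])
  have hprod : (a - b) * f' ≤ 0 := by
    simpa using hmax.localize.hasFDerivWithinAt_nonpos hf.hasFDerivAt.hasFDerivWithinAt hcone
  exact nonneg_of_mul_nonpos_right hprod (sub_neg.2 hab)

/-- If the second derivative were positive, the point would also be a local minimum, so `g` would
be locally constant. -/
lemma deriv_deriv_nonpos_of_isLocalMax {g : ℝ → ℝ} {a : ℝ} (hg : ContinuousAt g a)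
    (hmax : IsLocalMax g a) : deriv (deriv g) a ≤ 0 := by
  by_contra! hpos
  have hmin : IsLocalMin g a := isLocalMin_of_deriv_deriv_pos hpos hmax.deriv_eq_zero hg
  have hconst : g =ᶠ[nhds a] fun _ => g a := by
    filter_upwards [hmax, hmin] with y hle hge using le_antisymm hle hge
  have hzero : deriv (deriv g) a = 0 := by simpa using hconst.deriv.deriv_eq
  exact hpos.ne' hzero

lemma fderiv_fderiv_apply_nonpos_of_isLocalMax {E : Type*} [NormedAddCommGroup E]
    [NormedSpace ℝ E] {g : E → ℝ} {x : E} (hg : ContDiffAt ℝ 2 g x) (hmax : IsLocalMax g x)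
    (v : E) : fderiv ℝ (fun y => fderiv ℝ g y v) x v ≤ 0 := by
  have hline (s : ℝ) : HasDerivAt (fun r : ℝ => x + r • v) v s := by
    simpa using ((hasDerivAt_id s).smul_const v).const_add x
  have htendsto : Tendsto (fun r : ℝ => x + r • v) (nhds 0) (nhds x) := by
    simpa using (hline 0).continuousAt.tendsto
  have hfirst : deriv (fun r : ℝ => g (x + r • v)) =ᶠ[nhds 0]
      fun r => fderiv ℝ g (x + r • v) v := by
    filter_upwards [htendsto.eventually (hg.eventually (by simp))] with r hr
    exact ((hr.differentiableAt two_ne_zero).hasFDerivAt.comp_hasDerivAt r (hline r)).deriv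
  have hfderiv : DifferentiableAt ℝ (fun y => fderiv ℝ g y v) (x + (0 : ℝ) • v) := by
    rw [zero_smul, add_zero]
    exact ((hg.fderiv_right (m := 1) (by norm_num)).differentiableAt one_ne_zero).clm_apply
      (differentiableAt_const v)
  have hsecond : deriv (deriv fun r : ℝ => g (x + r • v)) 0
      = fderiv ℝ (fun y => fderiv ℝ g y v) x v := by
    rw [hfirst.deriv_eq]
    exact (hfderiv.hasFDerivAt.comp_hasDerivAt 0 (hline 0)).deriv.trans
      (by rw [zero_smul, add_zero])
  rw [← hsecond]
  refine deriv_deriv_nonpos_of_isLocalMax ?_ ?_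
  · exact ContinuousAt.comp (by simpa using hg.continuousAt) (hline 0).continuousAt
  · filter_upwards [htendsto.eventually hmax] with r hr
    simpa using hr

/-! ### Suprema and primitives of continuous functions -/

lemma continuousOn_sSup_image {X Y : Type*} [TopologicalSpace X] [TopologicalSpace Y] {s : Set X}
    {K : Set Y} (hK : IsCompact K) {f : X → Y → ℝ}
    (hf : ContinuousOn (fun p : X × Y => f p.1 p.2) (s ×ˢ univ)) :
    ContinuousOn (fun x => sSup (f x '' K)) s := by
  rw [continuousOn_iff_continuous_domRestrict]
  exact hK.continuous_sSup (f := fun (x : s) y => f x y)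
    (hf.comp_continuous (f := fun p : s × Y => ((p.1 : X), p.2)) (by fun_prop)
      fun p => ⟨p.1.2, mem_univ _⟩)

lemma continuousOn_integral_of_continuousOn_Icc {f : ℝ → ℝ} {a b : ℝ}
    (hf : ContinuousOn f (Icc a b)) : ContinuousOn (fun r => ∫ s in a..r, f s) (Icc a b) := by
  refine (intervalIntegral.continuousOn_primitive (μ := volume) hf.integrableOn_Icc).congr
    fun r hr => ?_
  exact intervalIntegral.integral_of_le hr.1

lemma hasDerivAt_integral_of_continuousOn_Icc {f : ℝ → ℝ} {a b t : ℝ}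
    (hf : ContinuousOn f (Icc a b)) (ht : t ∈ Ioo a b) :
    HasDerivAt (fun r => ∫ s in a..r, f s) (f t) t := by
  have hmeas : StronglyMeasurableAtFilter f (nhds t) :=
    (hf.mono Ioo_subset_Icc_self).stronglyMeasurableAtFilter isOpen_Ioo t ht
  exact intervalIntegral.integral_hasDerivAt_right
    ((hf.mono (Icc_subset_Icc_right ht.2.le)).intervalIntegrable_of_Icc ht.1.le) hmeas
    (hf.continuousAt (Icc_mem_nhds ht.1 ht.2))

/-! ### A maximum principle on a compact set -/

/-- At a positive maximum of `e^{-(M+1)t} w` over `[0,t] × K` the time derivative would be `< 0`,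
whereas at a maximum attained at a positive time it is `≥ 0`. -/
lemma nonpos_of_deriv_le_mul_at_isMaxOn_Ico {X : Type*} [TopologicalSpace X] {K : Set X}
    (hK : IsCompact K) {T M : ℝ} {w : ℝ → X → ℝ}
    (hcont : ContinuousOn (fun p : ℝ × X => w p.1 p.2) (Icc 0 T ×ˢ K))
    (hdiff : ∀ t ∈ Ioo 0 T, ∀ x ∈ K, DifferentiableAt ℝ (fun s => w s x) t)
    (hderiv : ∀ t ∈ Ioo 0 T, ∀ x ∈ K, IsMaxOn (w t) K x → 0 < w t x →
      deriv (fun s => w s x) t ≤ M * w t x)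
    (h0 : ∀ x ∈ K, w 0 x ≤ 0) : ∀ t ∈ Ico 0 T, ∀ x ∈ K, w t x ≤ 0 := by
  intro t ht x hx
  set e : ℝ → ℝ := fun s => Real.exp (-(M + 1) * s)
  have he (s : ℝ) : 0 < e s := Real.exp_pos _
  have he_deriv (s : ℝ) : HasDerivAt e (e s * -(M + 1)) s :=
    (hasDerivAt_const_mul (-(M + 1))).exp
  have hz_cont : ContinuousOn (fun p : ℝ × X => e p.1 * w p.1 p.2) (Icc 0 t ×ˢ K) :=
    ContinuousOn.mul (by fun_prop) (hcont.mono (prod_mono_left (Icc_subset_Icc_right ht.2.le)))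
  obtain ⟨⟨t₀, x₀⟩, ⟨ht₀, hx₀⟩, hmax⟩ := (isCompact_Icc.prod hK).exists_isMaxOn
    ⟨(t, x), right_mem_Icc.2 ht.1, hx⟩ hz_cont
  have hz_le (s : ℝ) (hs : s ∈ Icc 0 t) (y : X) (hy : y ∈ K) : e s * w s y ≤ e t₀ * w t₀ x₀ :=
    hmax (a := (s, y)) ⟨hs, hy⟩
  suffices hw₀ : w t₀ x₀ ≤ 0 from nonpos_of_mul_nonpos_right
    ((hz_le t (right_mem_Icc.2 ht.1) x hx).trans (mul_nonpos_of_nonneg_of_nonpos (he t₀).le hw₀))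
    (he t)
  by_contra! hpos
  have ht₀_pos : 0 < t₀ := ht₀.1.lt_of_ne fun h => (h0 x₀ hx₀).not_gt (h ▸ hpos)
  have ht₀T : t₀ ∈ Ioo 0 T := ⟨ht₀_pos, ht₀.2.trans_lt ht.2⟩
  have hspace : IsMaxOn (w t₀) K x₀ := fun y hy => le_of_mul_le_mul_left (hz_le t₀ ht₀ y hy) (he t₀)
  have hz_deriv := (he_deriv t₀).mul (hdiff t₀ ht₀T x₀ hx₀).hasDerivAt
  have hz_nonneg := deriv_nonneg_of_isMaxOn_Icc ht₀_pos hz_deriv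
    fun s hs => hz_le s ⟨hs.1, hs.2.trans ht₀.2⟩ x₀ hx₀
  have hw_deriv := hderiv t₀ ht₀T x₀ hx₀ hspace hpos
  linarith [mul_le_mul_of_nonneg_left hw_deriv (he t₀).le, mul_pos (he t₀) hpos]

theorem nonpos_of_deriv_le_mul_at_isMaxOn {X : Type*} [TopologicalSpace X] {K : Set X}
    (hK : IsCompact K) {T M : ℝ} {w : ℝ → X → ℝ}
    (hcont : ContinuousOn (fun p : ℝ × X => w p.1 p.2) (Icc 0 T ×ˢ K))
    (hdiff : ∀ t ∈ Ioo 0 T, ∀ x ∈ K, DifferentiableAt ℝ (fun s => w s x) t)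
    (hderiv : ∀ t ∈ Ioo 0 T, ∀ x ∈ K, IsMaxOn (w t) K x → 0 < w t x →
      deriv (fun s => w s x) t ≤ M * w t x)
    (h0 : ∀ x ∈ K, w 0 x ≤ 0) : ∀ t ∈ Icc 0 T, ∀ x ∈ K, w t x ≤ 0 := by
  intro t ht x hx
  rcases ht.1.eq_or_lt with rfl | ht_pos
  · exact h0 x hx
  have hclosure : closure (Ico 0 T) = Icc 0 T := closure_Ico (ht_pos.trans_le ht.2).ne
  have hcont_x : ContinuousOn (fun s => w s x) (Icc 0 T) :=
    hcont.comp (f := fun s => (s, x)) (by fun_prop) fun s hs => ⟨hs, hx⟩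
  refine le_on_closure (f := fun s => w s x) (s := Ico 0 T)
    (fun s hs => nonpos_of_deriv_le_mul_at_isMaxOn_Ico hK hcont hdiff hderiv h0 s hs x hx)
    (by rwa [hclosure]) continuousOn_const (by rwa [hclosure])

/-! ### Partial derivatives of periodic functions -/

section Periodic

variable {ι : Type*}

/-- `ℤ^ι`-periodicity, the analogue of `PeriodicSpace` in arbitrary dimension. -/
def LatticePeriodic {α : Type*} (f : (ι → ℝ) → α) : Prop :=
  ∀ (x : ι → ℝ) (z : ι → ℤ), f (x + fun i => (z i : ℝ)) = f x

lemma LatticePeriodic.exists_mem_Icc_eq {α : Type*} {f : (ι → ℝ) → α} (hf : LatticePeriodic f)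
    (x : ι → ℝ) : ∃ y ∈ Icc (0 : ι → ℝ) 1, f y = f x := by
  refine ⟨fun i => Int.fract (x i),
    ⟨fun i => Int.fract_nonneg _, fun i => (Int.fract_lt_one _).le⟩, ?_⟩
  rw [← hf _ fun i => ⌊x i⌋]
  exact congrArg f (funext fun i => Int.fract_add_floor (x i))

lemma LatticePeriodic.isMaxOn_univ {g : (ι → ℝ) → ℝ} (hg : LatticePeriodic g) {x : ι → ℝ}
    (hx : IsMaxOn g (Icc 0 1) x) : IsMaxOn g univ x := by
  intro y _
  obtain ⟨y', hy', hyy'⟩ := hg.exists_mem_Icc_eq y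
  exact hyy'.symm.trans_le (hx hy')

lemma LatticePeriodic.range_eq_image {α : Type*} {f : (ι → ℝ) → α} (hf : LatticePeriodic f) :
    range f = f '' Icc 0 1 :=
  (range_subset_iff.2 hf.exists_mem_Icc_eq : range f ⊆ f '' Icc 0 1).antisymm
    (image_subset_range f _)

lemma LatticePeriodic.comp_left {α β : Type*} {f : (ι → ℝ) → α} (hf : LatticePeriodic f)
    (φ : α → β) : LatticePeriodic fun x => φ (f x) := fun x z =>
  congrArg φ (hf x z)

end Periodic

section PartialDeriv

variable {ι : Type*} [DecidableEq ι]

/-- The `i`-th partial derivative on `ι → ℝ`, the analogue of `pd` in arbitrary dimension. -/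
noncomputable def partialDeriv (i : ι) (g : (ι → ℝ) → ℝ) (x : ι → ℝ) : ℝ :=
  fderiv ℝ g x (Pi.single i 1)

variable [Finite ι]

lemma LatticePeriodic.partialDeriv {g : (ι → ℝ) → ℝ} (hg : LatticePeriodic g) (i : ι) :
    LatticePeriodic (partialDeriv i g) := by
  intro x z
  have := Fintype.ofFinite ι
  have hshift : (fun y => g (y + fun i => (z i : ℝ))) = g := funext fun y => hg y z
  rw [_root_.partialDeriv, ← fderiv_comp_add_right, hshift, _root_.partialDeriv]

lemma partialDeriv_neg (i : ι) (g : (ι → ℝ) → ℝ) :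
    partialDeriv i (fun y => -g y) = fun y => -partialDeriv i g y := by
  have := Fintype.ofFinite ι
  funext x
  simp [partialDeriv, fderiv_fun_neg]

lemma partialDeriv_sub_const (i : ι) (g : (ι → ℝ) → ℝ) (c : ℝ) :
    partialDeriv i (fun y => g y - c) = partialDeriv i g := by
  have := Fintype.ofFinite ι
  funext x
  simp [partialDeriv, fderiv_sub_const]

lemma partialDeriv_eq_zero_of_isLocalMax {g : (ι → ℝ) → ℝ} {x : ι → ℝ} (hmax : IsLocalMax g x)
    (i : ι) : partialDeriv i g x = 0 := by
  have := Fintype.ofFinite ι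
  simp [partialDeriv, hmax.fderiv_eq_zero]

end PartialDeriv

section Divergence

variable {ι : Type*} [Fintype ι] [DecidableEq ι]

/-- The divergence on `ι → ℝ`, the analogue of `divg` in arbitrary dimension. -/
noncomputable def divergence (v : (ι → ℝ) → (ι → ℝ)) (x : ι → ℝ) : ℝ :=
  ∑ i, partialDeriv i (fun y => v y i) x

/-- The Laplacian on `ι → ℝ`, the analogue of `lap` in arbitrary dimension. Mathlib's Laplacian
needs an inner product, which the sup-normed space `ι → ℝ` does not have. -/
noncomputable def coordLaplacian (g : (ι → ℝ) → ℝ) (x : ι → ℝ) : ℝ :=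
  ∑ i, partialDeriv i (partialDeriv i g) x

lemma LatticePeriodic.divergence {v : (ι → ℝ) → (ι → ℝ)} (hv : LatticePeriodic v) :
    LatticePeriodic (divergence v) := fun x z =>
  Finset.sum_congr rfl fun i _ =>
    LatticePeriodic.partialDeriv (g := fun y => v y i) (fun y z => congrFun (hv y z) i) i x z

lemma divergence_neg (v : (ι → ℝ) → (ι → ℝ)) (x : ι → ℝ) :
    divergence (fun y => -v y) x = -divergence v x := by
  simp only [divergence, Pi.neg_apply, partialDeriv_neg, Finset.sum_neg_distrib]

lemma coordLaplacian_neg (g : (ι → ℝ) → ℝ) (x : ι → ℝ) :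
    coordLaplacian (fun y => -g y) x = -coordLaplacian g x := by
  simp only [coordLaplacian, partialDeriv_neg, Finset.sum_neg_distrib]

lemma coordLaplacian_sub_const (g : (ι → ℝ) → ℝ) (c : ℝ) (x : ι → ℝ) :
    coordLaplacian (fun y => g y - c) x = coordLaplacian g x := by
  simp only [coordLaplacian, partialDeriv_sub_const]

lemma divergence_smul {g : (ι → ℝ) → ℝ} {v : (ι → ℝ) → (ι → ℝ)} {x : ι → ℝ}
    (hg : DifferentiableAt ℝ g x) (hv : DifferentiableAt ℝ v x) :
    divergence (fun y => g y • v y) x = g x * divergence v x + ∑ i, v x i * partialDeriv i g x := by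
  have hterm (i : ι) : partialDeriv i (fun y => (g y • v y) i) x
      = g x * partialDeriv i (fun y => v y i) x + v x i * partialDeriv i g x := by
    simp [partialDeriv, fderiv_fun_mul hg (differentiableAt_pi.1 hv i)]
  simp only [divergence, hterm, Finset.sum_add_distrib, Finset.mul_sum]

lemma divergence_sub_const_smul {g : (ι → ℝ) → ℝ} {v : (ι → ℝ) → (ι → ℝ)} {x : ι → ℝ}
    (hg : DifferentiableAt ℝ g x) (hv : DifferentiableAt ℝ v x) (c : ℝ) :
    divergence (fun y => (g y - c) • v y) x
      = divergence (fun y => g y • v y) x - c * divergence v x := by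
  rw [divergence_smul (hg.sub_const c) hv, divergence_smul hg hv]
  simp only [partialDeriv_sub_const]
  ring

lemma coordLaplacian_nonpos_of_isLocalMax {g : (ι → ℝ) → ℝ} {x : ι → ℝ}
    (hg : ContDiffAt ℝ 2 g x) (hmax : IsLocalMax g x) : coordLaplacian g x ≤ 0 :=
  Finset.sum_nonpos fun i _ => fderiv_fderiv_apply_nonpos_of_isLocalMax hg hmax (Pi.single i 1)

end Divergence

/-! ### Drifts and subsolutions -/

section Density

variable {ι : Type*} [Fintype ι]

/-- Periodic densities on `[0,T] × ℝ^ι` to which the continuity equation applies classically.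
Derivatives are only asked for at interior times, where the equation is imposed. -/
structure IsRegularDensity (T : ℝ) (ρ : ℝ → (ι → ℝ) → ℝ) : Prop where
  periodic : ∀ t ∈ Icc 0 T, LatticePeriodic (ρ t)
  continuousOn : ContinuousOn (fun p : ℝ × (ι → ℝ) => ρ p.1 p.2) (Icc 0 T ×ˢ univ)
  contDiff : ∀ t ∈ Ioo 0 T, ContDiff ℝ 2 (ρ t)
  differentiableAt_time : ∀ t ∈ Ioo 0 T, ∀ x, DifferentiableAt ℝ (fun s => ρ s x) t

lemma IsRegularDensity.neg {T : ℝ} {ρ : ℝ → (ι → ℝ) → ℝ} (hρ : IsRegularDensity T ρ) :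
    IsRegularDensity T (fun t x => -ρ t x) where
  periodic t ht x z := congrArg Neg.neg (hρ.periodic t ht x z)
  continuousOn := hρ.continuousOn.neg
  contDiff t ht := (hρ.contDiff t ht).neg
  differentiableAt_time t ht x := (hρ.differentiableAt_time t ht x).fun_neg

end Density

section Subsolution

variable {ι : Type*} [Fintype ι] [DecidableEq ι]

/-- Periodic velocity fields on `[0,T] × ℝ^ι`: the drifts of the continuity equation in arbitrary
dimension. Only the divergence, not the full gradient, is asked to be continuous. -/
structure IsRegularDrift (T : ℝ) (u : ℝ → (ι → ℝ) → (ι → ℝ)) : Prop where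
  periodic : ∀ t ∈ Icc 0 T, LatticePeriodic (u t)
  differentiable : ∀ t ∈ Ioo 0 T, Differentiable ℝ (u t)
  continuousOn_divergence :
    ContinuousOn (fun p : ℝ × (ι → ℝ) => divergence (u p.1) p.2) (Icc 0 T ×ˢ univ)

/-- Classical periodic subsolutions of the viscous continuity equation: `∂ₜw + div(wu) ≤ ε Δw`. -/
structure IsViscousSubsolution (ε T : ℝ) (u : ℝ → (ι → ℝ) → (ι → ℝ)) (w : ℝ → (ι → ℝ) → ℝ) : Prop
    extends IsRegularDensity T w where
  le : ∀ t ∈ Ioo 0 T, ∀ x, deriv (fun s => w s x) t + divergence (fun y => w t y • u t y) x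
    ≤ ε * coordLaplacian (w t) x

variable {ε T : ℝ} {u : ℝ → (ι → ℝ) → (ι → ℝ)}

lemma isViscousSubsolution_neg {ρ : ℝ → (ι → ℝ) → ℝ} (hρ : IsRegularDensity T ρ)
    (hpde : ∀ t ∈ Ioo 0 T, ∀ x, ε * coordLaplacian (ρ t) x
      ≤ deriv (fun s => ρ s x) t + divergence (fun y => ρ t y • u t y) x) :
    IsViscousSubsolution ε T u (fun t x => -ρ t x) where
  toIsRegularDensity := hρ.neg
  le t ht x := by
    simp only [deriv.fun_neg, neg_smul, divergence_neg, coordLaplacian_neg]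
    linarith [hpde t ht x]

lemma IsViscousSubsolution.sub_time (hu : IsRegularDrift T u) {w : ℝ → (ι → ℝ) → ℝ}
    (hw : IsViscousSubsolution ε T u w) {b b' : ℝ → ℝ} (hb : ContinuousOn b (Icc 0 T))
    (hb' : ∀ t ∈ Ioo 0 T, HasDerivAt b (b' t) t)
    (hsuper : ∀ t ∈ Ioo 0 T, ∀ x, 0 ≤ b' t + b t * divergence (u t) x) :
    IsViscousSubsolution ε T u (fun t x => w t x - b t) where
  periodic t ht x z := congrArg (· - b t) (hw.periodic t ht x z)
  continuousOn := hw.continuousOn.sub (hb.comp continuousOn_fst fun _ hp => hp.1)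
  contDiff t ht := (hw.contDiff t ht).sub contDiff_const
  differentiableAt_time t ht x := (hw.differentiableAt_time t ht x).sub (hb' t ht).differentiableAt
  le t ht x := by
    have htime : deriv (fun s => w s x - b s) t = deriv (fun s => w s x) t - b' t :=
      ((hw.differentiableAt_time t ht x).hasDerivAt.sub (hb' t ht)).deriv
    rw [htime, coordLaplacian_sub_const, divergence_sub_const_smul
      ((hw.contDiff t ht).differentiable two_ne_zero x) (hu.differentiable t ht x)]
    linarith [hw.le t ht x, hsuper t ht x]

lemma IsViscousSubsolution.deriv_le_of_isLocalMax (hε : 0 ≤ ε) (hu : IsRegularDrift T u)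
    {w : ℝ → (ι → ℝ) → ℝ} (hw : IsViscousSubsolution ε T u w) {t : ℝ} (ht : t ∈ Ioo 0 T)
    {x : ι → ℝ} (hmax : IsLocalMax (w t) x) :
    deriv (fun s => w s x) t ≤ -divergence (u t) x * w t x := by
  have hdiffusion : ε * coordLaplacian (w t) x ≤ 0 := mul_nonpos_of_nonneg_of_nonpos hε
    (coordLaplacian_nonpos_of_isLocalMax (hw.contDiff t ht).contDiffAt hmax)
  have htransport : divergence (fun y => w t y • u t y) x = w t x * divergence (u t) x := by
    rw [divergence_smul ((hw.contDiff t ht).differentiable two_ne_zero x)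
      (hu.differentiable t ht x)]
    simp only [partialDeriv_eq_zero_of_isLocalMax hmax, mul_zero, Finset.sum_const_zero, add_zero]
  linarith [hw.le t ht x]

lemma IsRegularDrift.exists_abs_divergence_le (hu : IsRegularDrift T u) :
    ∃ M, ∀ t ∈ Icc 0 T, ∀ x ∈ Icc (0 : ι → ℝ) 1, |divergence (u t) x| ≤ M := by
  obtain ⟨M, hM⟩ := (isCompact_Icc.prod isCompact_Icc).exists_bound_of_continuousOn
    (hu.continuousOn_divergence.mono (prod_mono_right (subset_univ (Icc (0 : ι → ℝ) 1))))
  exact ⟨M, fun t ht x hx => hM (t, x) ⟨ht, hx⟩⟩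

theorem IsViscousSubsolution.nonpos (hε : 0 ≤ ε) (hu : IsRegularDrift T u)
    {w : ℝ → (ι → ℝ) → ℝ} (hw : IsViscousSubsolution ε T u w) (h0 : ∀ x, w 0 x ≤ 0) :
    ∀ t ∈ Icc 0 T, ∀ x, w t x ≤ 0 := by
  obtain ⟨M, hM⟩ := hu.exists_abs_divergence_le
  have hderiv : ∀ t ∈ Ioo 0 T, ∀ x ∈ Icc (0 : ι → ℝ) 1, IsMaxOn (w t) (Icc 0 1) x → 0 < w t x →
      deriv (fun s => w s x) t ≤ M * w t x := by
    intro t ht x hx hmax hpos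
    have ht' : t ∈ Icc 0 T := Ioo_subset_Icc_self ht
    have hlocal : IsLocalMax (w t) x :=
      ((hw.periodic t ht').isMaxOn_univ hmax).isLocalMax univ_mem
    calc deriv (fun s => w s x) t ≤ -divergence (u t) x * w t x :=
          hw.deriv_le_of_isLocalMax hε hu ht hlocal
      _ ≤ M * w t x := by gcongr; exact (neg_le_abs _).trans (hM t ht' x hx)
  intro t ht x
  obtain ⟨y, hy, hyx⟩ := (hw.periodic t ht).exists_mem_Icc_eq x
  rw [← hyx]
  exact nonpos_of_deriv_le_mul_at_isMaxOn isCompact_Icc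
    (hw.continuousOn.mono (prod_mono_right (subset_univ _)))
    (fun t ht x _ => hw.differentiableAt_time t ht x) hderiv (fun x _ => h0 x) t ht y hy

/-! ### Comparison with exponentials of the integrated divergence -/

lemma IsRegularDrift.continuousOn_iSup_abs_divergence (hu : IsRegularDrift T u) :
    ContinuousOn (fun t => ⨆ y, |divergence (u t) y|) (Icc 0 T) := by
  refine (continuousOn_sSup_image (f := fun t y => |divergence (u t) y|)
    (isCompact_Icc (a := (0 : ι → ℝ)) (b := 1)) hu.continuousOn_divergence.abs).congr fun t ht => ?_
  exact congrArg sSup ((hu.periodic t ht).divergence.comp_left abs).range_eq_image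

lemma IsRegularDrift.abs_divergence_le_iSup (hu : IsRegularDrift T u) {t : ℝ} (ht : t ∈ Icc 0 T)
    (x : ι → ℝ) : |divergence (u t) x| ≤ ⨆ y, |divergence (u t) y| := by
  obtain ⟨M, hM⟩ := hu.exists_abs_divergence_le
  refine le_ciSup (f := fun y => |divergence (u t) y|) ⟨M, ?_⟩ x
  rw [((hu.periodic t ht).divergence.comp_left abs).range_eq_image]
  exact forall_mem_image.2 (hM t ht)

theorem IsViscousSubsolution.le_mul_exp (hε : 0 ≤ ε) (hu : IsRegularDrift T u)
    {w : ℝ → (ι → ℝ) → ℝ} (hw : IsViscousSubsolution ε T u w) {C σ : ℝ} (hσ : σ * C = |C|)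
    (h0 : ∀ x, w 0 x ≤ C) : ∀ t ∈ Icc 0 T, ∀ x,
      w t x ≤ C * Real.exp (σ * ∫ s in (0 : ℝ)..t, ⨆ y, |divergence (u s) y|) := by
  set m : ℝ → ℝ := fun t => ⨆ y, |divergence (u t) y|
  set b : ℝ → ℝ := fun t => C * Real.exp (σ * ∫ s in (0 : ℝ)..t, m s)
  have hm : ContinuousOn m (Icc 0 T) := hu.continuousOn_iSup_abs_divergence
  have hb : ContinuousOn b (Icc 0 T) :=
    ((continuousOn_integral_of_continuousOn_Icc hm).const_mul σ).rexp.const_mul C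
  have hb' : ∀ t ∈ Ioo 0 T, HasDerivAt b (|b t| * m t) t := by
    intro t ht
    have hexp := (((hasDerivAt_integral_of_continuousOn_Icc hm ht).const_mul σ).exp).const_mul C
    refine hexp.congr_deriv ?_
    simp only [b, abs_mul, Real.abs_exp, ← hσ]
    ring
  have hsuper : ∀ t ∈ Ioo 0 T, ∀ x, 0 ≤ |b t| * m t + b t * divergence (u t) x := by
    intro t ht x
    have hle : |b t * divergence (u t) x| ≤ |b t| * m t := by
      rw [abs_mul]
      gcongr
      exact hu.abs_divergence_le_iSup (Ioo_subset_Icc_self ht) x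
    linarith [neg_abs_le (b t * divergence (u t) x)]
  intro t ht x
  refine sub_nonpos.1 ((hw.sub_time hu hb hb' hsuper).nonpos hε hu (fun x => ?_) t ht x)
  simpa [b] using h0 x

theorem maximum_principle_viscous_continuity_general {ρl ρh : ℝ} (hε : 0 ≤ ε) (hρl : 0 ≤ ρl)
    {ρ : ℝ → (ι → ℝ) → ℝ} (hu : IsRegularDrift T u) (hρ : IsRegularDensity T ρ)
    (hpde : ∀ t ∈ Ioo 0 T, ∀ x, deriv (fun s => ρ s x) t + divergence (fun y => ρ t y • u t y) x
      = ε * coordLaplacian (ρ t) x)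
    (h0 : ∀ x, ρl ≤ ρ 0 x ∧ ρ 0 x ≤ ρh) :
    ∀ t ∈ Icc 0 T, ∀ x,
      ρl * Real.exp (-(∫ s in (0 : ℝ)..t, ⨆ y, |divergence (u s) y|)) ≤ ρ t x ∧
      ρ t x ≤ ρh * Real.exp (∫ s in (0 : ℝ)..t, ⨆ y, |divergence (u s) y|) := by
  intro t ht x
  have hρh : 0 ≤ ρh := hρl.trans ((h0 0).1.trans (h0 0).2)
  have hsub : IsViscousSubsolution ε T u ρ := ⟨hρ, fun t ht x => (hpde t ht x).le⟩
  have hsub_neg := isViscousSubsolution_neg hρ fun t ht x => (hpde t ht x).ge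
  have hupper := hsub.le_mul_exp hε hu (C := ρh) (σ := 1)
    (by rw [one_mul, abs_of_nonneg hρh]) (fun x => (h0 x).2) t ht x
  have hlower := hsub_neg.le_mul_exp hε hu (C := -ρl) (σ := -1)
    (by rw [neg_one_mul, abs_neg, neg_neg, abs_of_nonneg hρl]) (fun x => neg_le_neg (h0 x).1) t ht x
  rw [one_mul] at hupper
  rw [neg_one_mul, neg_mul] at hlower
  exact ⟨neg_le_neg_iff.1 hlower, hupper⟩

end Subsolution

lemma RegVel.isRegularDrift {T : ℝ} {u : ℝ → (Fin 3 → ℝ) → (Fin 3 → ℝ)} (hu : RegVel T u) :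
    IsRegularDrift T u where
  periodic := hu.periodic
  differentiable t ht := (hu.smoothSpace t (Ioo_subset_Icc_self ht)).differentiable two_ne_zero
  continuousOn_divergence := continuousOn_finsetSum _ fun i _ => hu.cont1 i i

lemma RegDens.isRegularDensity {T : ℝ} {ρ : ℝ → (Fin 3 → ℝ) → ℝ} (hρ : RegDens T ρ) :
    IsRegularDensity T ρ where
  periodic := hρ.periodic
  continuousOn := hρ.cont0
  contDiff t ht := hρ.smoothSpace t (Ioo_subset_Icc_self ht)
  differentiableAt_time t ht x := hρ.diffTime x t (Ioo_subset_Icc_self ht)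

/-- Maximum principle for the viscous continuity equation on the torus:
`ρ̲ exp(−∫₀ᵗ ‖div u(s)‖_∞ ds) ≤ ρ(t,x) ≤ ρ̄ exp(∫₀ᵗ ‖div u(s)‖_∞ ds)`. -/
theorem maximum_principle_viscous_continuity
    (ε T ρl ρh : ℝ) (hε : 0 < ε) (hT : 0 < T) (hρl : 0 < ρl) (hρlh : ρl ≤ ρh)
    (u : ℝ → (Fin 3 → ℝ) → (Fin 3 → ℝ)) (ρ : ℝ → (Fin 3 → ℝ) → ℝ)
    (hu : RegVel T u) (hρ : RegDens T ρ)
    (hpde : SolvesViscousContinuity ε T ρ u)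
    (h0 : ∀ x : Fin 3 → ℝ, ρl ≤ ρ 0 x ∧ ρ 0 x ≤ ρh) :
    ∀ t ∈ Set.Icc (0:ℝ) T, ∀ x : Fin 3 → ℝ,
      ρl * Real.exp (-(∫ s in (0:ℝ)..t, ⨆ y : Fin 3 → ℝ, |divg (u s) y|)) ≤ ρ t x ∧
      ρ t x ≤ ρh * Real.exp (∫ s in (0:ℝ)..t, ⨆ y : Fin 3 → ℝ, |divg (u s) y|) :=
  maximum_principle_viscous_continuity_general hε.le hρl.le hu.isRegularDrift hρ.isRegularDensity
    hpde h0
end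

section
/- Let ε > 0, T > 0 and M > 0. For i = 1,2 let uᵢ : [0,T] × ℝ³ → ℝ³ be continuous and ℤ³-periodic in the space variable with continuous spatial derivatives up to order two, satisfying sup_{t∈[0,T]} ( sup_x |uᵢ(t,x)| + sup_x |∇uᵢ(t,x)| ) ≤ M; let ρᵢ : [0,T] × ℝ³ → ℝ be ℤ³-periodic in x, continuously differentiable in t and twice continuously differentiable in x, solving ∂ₜρᵢ + div(ρᵢ uᵢ) = ε Δρᵢ pointwise on (0,T) × ℝ³, with ρ₁(0,·) = ρ₂(0,·) and sup_{t∈[0,T]} ( sup_x |ρᵢ(t,x)| + sup_x |∇ρᵢ(t,x)| + sup_x |∇²ρᵢ(t,x)| ) ≤ M. Then there exists a constant C, depending only on ε, T and M, such that sup_{t∈[0,T]} ‖ρ₁(t,·) − ρ₂(t,·)‖_{W^{1,2}(𝕋³)} ≤ C · sup_{t∈[0,T]} ‖u₁(t,·) − u₂(t,·)‖_{W^{1,2}(𝕋³)}. -/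
/-!
The proof is an energy estimate for `w = ρ₁ - ρ₂`, which solves `∂ₜw = εΔw - F` with
`F = div(ρ₁u₁) - div(ρ₂u₂) = div(w u₁) + div(ρ₂ (u₁ - u₂))`. The second form is linear in the
differences, so `F² ≤ 6M² (w² + |∇w|² + |u₁ - u₂|² + |∇(u₁ - u₂)|²)` pointwise.

Let `E(t) = ∫ (w² + |∇w|²)`. Formally `E' = 2∫ ∂ₜw (w - Δw)`, but `∂ₜ∇w` need not exist. Since
`Δ` is symmetric on the torus, `E(t) - E(s)` is exactly
`∫ (w(t) - w(s)) (w(t) - Δw(t) + w(s) - Δw(s))`, where only `w` itself is differenced in time, and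
dominated convergence yields the formula for `E'`.

Inserting the equation, `∫ wΔw = -∫ |∇w|² ≤ 0`, and `2FΔw ≤ F²/(2ε) + 2ε|Δw|²` is absorbed by the
dissipation. Hence `E' ≤ K (E + D²)`, where `D` is the supremum in time of the `W^{1,2}` norm of
`u₁ - u₂`. As `E(0) = 0`, Grönwall's inequality gives `E(t) ≤ exp(KT) D²`.
-/

open MeasureTheory Set Filter BigOperators

/-- The fundamental domain `[0,1)³` of the torus `𝕋³`. -/
def box : Set (Fin 3 → ℝ) := Set.univ.pi fun _ => Set.Ico (0:ℝ) 1

/-- The `W^{1,2}(𝕋³)` norm of a scalar field. -/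
noncomputable def sobNormS (g : (Fin 3 → ℝ) → ℝ) : ℝ :=
  Real.sqrt (∫ x in box, (g x ^ 2 + ∑ i, pd i g x ^ 2))

/-- The `W^{1,2}(𝕋³)` norm of a vector field. -/
noncomputable def sobNormV (g : (Fin 3 → ℝ) → (Fin 3 → ℝ)) : ℝ :=
  Real.sqrt (∫ x in box, ((∑ j, g x j ^ 2) + ∑ i, ∑ j, pd i (fun y => g y j) x ^ 2))

open Function
open scoped Topology

/-! ### Real-variable lemmas -/

/-- Mathlib's Grönwall inequalities need the differential inequality at the left endpoint, where the
equation is not assumed. -/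
theorem le_exp_mul_of_hasDerivAt_le {f f' : ℝ → ℝ} {K a b : ℝ} (hf : ContinuousOn f (Icc a b))
    (hf' : ∀ t ∈ Ioo a b, HasDerivAt f (f' t) t) (hle : ∀ t ∈ Ioo a b, f' t ≤ K * f t)
    {t : ℝ} (ht : t ∈ Icc a b) : f t ≤ Real.exp (K * (t - a)) * f a := by
  have hder : ∀ s ∈ Ioo a b, HasDerivAt (fun s => Real.exp (-K * (s - a)) * f s)
      (Real.exp (-K * (s - a)) * (f' s - K * f s)) s := fun s hs =>
    ((((hasDerivAt_id s).sub_const a).const_mul (-K)).exp.mul (hf' s hs)).congr_deriv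
      (by simp only [id_eq]; ring)
  have hanti : AntitoneOn (fun s => Real.exp (-K * (s - a)) * f s) (Icc a b) := by
    refine antitoneOn_of_deriv_nonpos (convex_Icc a b) (by fun_prop) ?_ ?_ <;> rw [interior_Icc]
    · exact fun s hs => (hder s hs).differentiableAt.differentiableWithinAt
    · intro s hs
      rw [(hder s hs).deriv]
      exact mul_nonpos_of_nonneg_of_nonpos (Real.exp_pos _).le (sub_nonpos.2 (hle s hs))
  have hdecay : Real.exp (-K * (t - a)) * f t ≤ f a := by
    simpa using hanti (left_mem_Icc.2 (ht.1.trans ht.2)) ht ht.1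
  calc f t = Real.exp (K * (t - a)) * (Real.exp (-K * (t - a)) * f t) := by
        rw [← mul_assoc, ← Real.exp_add]; simp
    _ ≤ Real.exp (K * (t - a)) * f a := by gcongr

theorem add_le_sq_of_sqrt_add_sqrt_le {a b M : ℝ} (ha : 0 ≤ a) (hb : 0 ≤ b)
    (h : √a + √b ≤ M) : a + b ≤ M ^ 2 := by
  nlinarith [Real.sq_sqrt ha, Real.sq_sqrt hb, Real.sqrt_nonneg a, Real.sqrt_nonneg b]

theorem norm_slope_le_of_norm_hasDerivWithinAt_le {E : Type*} [NormedAddCommGroup E]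
    [NormedSpace ℝ E] {f f' : ℝ → E} {I : Set ℝ} {C : ℝ} (hI : Convex ℝ I)
    (hf : ∀ t ∈ I, HasDerivWithinAt f (f' t) I t) (hC : ∀ t ∈ I, ‖f' t‖ ≤ C)
    {s t : ℝ} (hs : s ∈ I) (ht : t ∈ I) : ‖slope f s t‖ ≤ C := by
  rw [slope_def_module, norm_smul, norm_inv]
  refine inv_mul_le_of_le_mul₀ (norm_nonneg _) ((norm_nonneg _).trans (hC s hs)) ?_
  rw [mul_comm]
  exact hI.norm_image_sub_le_of_norm_hasDerivWithin_le hf hC hs ht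

theorem tendsto_setIntegral_slope_mul {X : Type*} [TopologicalSpace X] [T2Space X]
    [MeasurableSpace X] [OpensMeasurableSpace X] {μ : Measure X} [IsFiniteMeasureOnCompacts μ]
    {K : Set X} (hK : IsCompact K) {I : Set ℝ} (hI : IsCompact I) (hIc : Convex ℝ I)
    {f f' g : ℝ → X → ℝ} (hfK : ∀ t ∈ I, ContinuousOn (f t) K)
    (hf : ∀ x ∈ K, ∀ t ∈ I, HasDerivWithinAt (fun r => f r x) (f' t x) I t)
    (hf' : ContinuousOn (uncurry f') (I ×ˢ K)) (hg : ContinuousOn (uncurry g) (I ×ˢ K))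
    {s : ℝ} (hs : s ∈ I) :
    Tendsto (fun t => ∫ x in K, slope (fun r => f r x) s t * g t x ∂μ) (𝓝[I \ {s}] s)
      (𝓝 (∫ x in K, f' s x * g s x ∂μ)) := by
  obtain ⟨A, hA⟩ := (hI.prod hK).exists_bound_of_continuousOn hf'
  obtain ⟨B, hB⟩ := (hI.prod hK).exists_bound_of_continuousOn hg
  have hmem : ∀ᶠ t in 𝓝[I \ {s}] s, t ∈ I \ {s} := self_mem_nhdsWithin
  refine tendsto_integral_filter_of_dominated_convergence (fun _ => A * B) ?_ ?_
    (continuousOn_const.integrableOn_compact hK) ?_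
  · filter_upwards [hmem] with t ht
    have hslope : ContinuousOn (fun x => slope (fun r => f r x) s t) K := by
      simp only [slope_def_field]
      exact ((hfK t ht.1).sub (hfK s hs)).div_const _
    exact (hslope.mul (hg.uncurry_left t ht.1)).aestronglyMeasurable hK.measurableSet
  · filter_upwards [hmem] with t ht
    refine (ae_restrict_iff' hK.measurableSet).2 (.of_forall fun x hx => ?_)
    have hslope : ‖slope (fun r => f r x) s t‖ ≤ A :=
      norm_slope_le_of_norm_hasDerivWithinAt_le hIc (hf x hx) (fun r hr => hA (r, x) ⟨hr, hx⟩)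
        hs ht.1
    rw [norm_mul]
    exact mul_le_mul hslope (hB (t, x) ⟨ht.1, hx⟩) (norm_nonneg _) ((norm_nonneg _).trans hslope)
  · refine (ae_restrict_iff' hK.measurableSet).2 (.of_forall fun x hx => ?_)
    exact (hasDerivWithinAt_iff_tendsto_slope.1 (hf x hx s hs)).mul
      ((hg.uncurry_right x hx s hs).tendsto.mono_left (nhdsWithin_mono _ sdiff_subset))

/-! ### Periodic fields and partial derivatives -/

theorem PeriodicSpace.sub {α : Type*} [Sub α] {f g : (Fin 3 → ℝ) → α} (hf : PeriodicSpace f)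
    (hg : PeriodicSpace g) : PeriodicSpace (f - g) :=
  fun x z => congrArg₂ (· - ·) (hf x z) (hg x z)

section PartialDerivatives

variable {f g : (Fin 3 → ℝ) → ℝ}

theorem pd_sub (hf : Differentiable ℝ f) (hg : Differentiable ℝ g) (i : Fin 3) :
    pd i (f - g) = pd i f - pd i g := by
  funext x
  simp only [pd, fderiv_sub (hf x) (hg x), sub_apply, Pi.sub_apply]

theorem pd_mul {x : Fin 3 → ℝ} (hf : DifferentiableAt ℝ f x) (hg : DifferentiableAt ℝ g x)
    (i : Fin 3) : pd i (fun y => f y * g y) x = pd i f x * g x + f x * pd i g x := by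
  simp only [pd, fderiv_fun_mul hf hg, add_apply, smul_apply, smul_eq_mul]
  ring

theorem contDiff_pd {m n : WithTop ℕ∞} (hf : ContDiff ℝ n f) (hmn : m + 1 ≤ n) (i : Fin 3) :
    ContDiff ℝ m (pd i f) :=
  (hf.fderiv_right hmn).clm_apply contDiff_const

theorem continuous_pd (hf : ContDiff ℝ 1 f) (i : Fin 3) : Continuous (pd i f) :=
  (contDiff_pd (m := 0) hf (by norm_num) i).continuous

theorem differentiable_pd (hf : ContDiff ℝ 2 f) (i : Fin 3) : Differentiable ℝ (pd i f) :=
  (contDiff_pd (m := 1) hf (by norm_num) i).differentiable one_ne_zero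

theorem pd_pd_sub (hf : ContDiff ℝ 2 f) (hg : ContDiff ℝ 2 g) (i j : Fin 3) :
    pd i (pd j (f - g)) = pd i (pd j f) - pd i (pd j g) := by
  rw [pd_sub (hf.differentiable two_ne_zero) (hg.differentiable two_ne_zero),
    pd_sub (differentiable_pd hf j) (differentiable_pd hg j)]

theorem continuous_lap (hf : ContDiff ℝ 2 f) : Continuous (lap f) :=
  continuous_finsetSum _ fun i _ => continuous_pd (contDiff_pd hf (by norm_num) i) i

theorem lap_sub (hf : ContDiff ℝ 2 f) (hg : ContDiff ℝ 2 g) : lap (f - g) = lap f - lap g := by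
  funext x
  simp only [lap, pd_pd_sub hf hg, Pi.sub_apply, Finset.sum_sub_distrib]

theorem PeriodicSpace.pd (hf : PeriodicSpace f) (i : Fin 3) : PeriodicSpace (pd i f) := by
  intro x z
  simp only [_root_.pd, ← fderiv_comp_add_right]
  congr 2
  funext y
  exact hf y z

variable {v : (Fin 3 → ℝ) → (Fin 3 → ℝ)}

theorem divg_smul {x : Fin 3 → ℝ} (hf : DifferentiableAt ℝ f x) (hv : DifferentiableAt ℝ v x) :
    divg (fun y => f y • v y) x =
      ∑ i, (pd i f x * v x i + f x * pd i (fun y => v y i) x) :=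
  Finset.sum_congr rfl fun i _ => pd_mul hf (differentiableAt_pi.1 hv i) i

theorem continuous_divg (hv : ContDiff ℝ 1 v) : Continuous (divg v) :=
  continuous_finsetSum _ fun i _ => continuous_pd (contDiff_pi.1 hv i) i

end PartialDerivatives

/-! ### Integration on the torus -/

/-- By periodicity, opposite faces of the unit cube cancel in the divergence theorem. -/
theorem integral_Icc_divergence_eq_zero {n : ℕ} {E : Type*} [NormedAddCommGroup E]
    [NormedSpace ℝ E] {F : Fin (n + 1) → (Fin (n + 1) → ℝ) → E} (hF : ∀ i, ContDiff ℝ 1 (F i))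
    (hper : ∀ i x, F i (x + Pi.single i 1) = F i x) :
    ∫ x in Icc (0 : Fin (n + 1) → ℝ) 1, ∑ i, fderiv ℝ (F i) x (Pi.single i 1) = 0 := by
  have hcont : Continuous fun x => ∑ i, fderiv ℝ (F i) x (Pi.single i 1) :=
    continuous_finsetSum _ fun i _ =>
      ((hF i).continuous_fderiv one_ne_zero).clm_apply continuous_const
  rw [integral_divergence_of_hasFDerivAt_off_countable' 0 1 zero_le_one F
    (fun i x => fderiv ℝ (F i) x) ∅ countable_empty (fun i => (hF i).continuous.continuousOn)
    (fun x _ i => ((hF i).differentiable one_ne_zero x).hasFDerivAt)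
    (hcont.continuousOn.integrableOn_compact isCompact_Icc)]
  refine Finset.sum_eq_zero fun i _ => sub_eq_zero.2 ?_
  congr 1
  funext y
  rw [← hper i (i.insertNth ((0 : Fin (n + 1) → ℝ) i) y)]
  congr 1
  funext j
  rcases Fin.eq_self_or_eq_succAbove i j with rfl | ⟨k, rfl⟩
  · simp
  · simp [Fin.succAbove_ne]

theorem setIntegral_box_eq_Icc (f : (Fin 3 → ℝ) → ℝ) :
    ∫ x in box, f x = ∫ x in Icc (0 : Fin 3 → ℝ) 1, f x :=
  setIntegral_congr_set (Measure.univ_pi_Ico_ae_eq_Icc (μ := fun _ : Fin 3 => (volume : Measure ℝ))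
    (f := (0 : Fin 3 → ℝ)) (g := 1))

theorem integrableOn_box {f : (Fin 3 → ℝ) → ℝ} (hf : Continuous f) : IntegrableOn f box :=
  (hf.continuousOn.integrableOn_compact isCompact_Icc).mono_set fun _ hx =>
    ⟨fun i => (hx i (mem_univ i)).1, fun i => (hx i (mem_univ i)).2.le⟩

section Green

variable {f g : (Fin 3 → ℝ) → ℝ}

theorem integral_box_mul_lap (hf : ContDiff ℝ 1 f) (hg : ContDiff ℝ 2 g)
    (pf : PeriodicSpace f) (pg : PeriodicSpace g) :
    ∫ x in box, f x * lap g x = -∫ x in box, ∑ i, pd i f x * pd i g x := by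
  have hg' : ∀ i, ContDiff ℝ 1 (pd i g) := contDiff_pd hg (by norm_num)
  have hper : ∀ i x, f (x + Pi.single i 1) * pd i g (x + Pi.single i 1) = f x * pd i g x := by
    intro i x
    have hz : (fun j => ((Pi.single i 1 : Fin 3 → ℤ) j : ℝ)) = Pi.single i 1 := by
      funext j
      simp [Pi.single_apply]
    rw [← hz, pf, pg.pd i]
  have hdiv := integral_Icc_divergence_eq_zero (F := fun i x => f x * pd i g x)
    (fun i => hf.mul (hg' i)) hper
  have hprod : ∀ x, ∑ i, fderiv ℝ (fun x => f x * pd i g x) x (Pi.single i 1) =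
      f x * lap g x + ∑ i, pd i f x * pd i g x := fun x => by
    rw [lap, Finset.mul_sum, ← Finset.sum_add_distrib]
    refine Finset.sum_congr rfl fun i _ => ?_
    rw [add_comm]
    exact pd_mul (hf.differentiable one_ne_zero x) ((hg' i).differentiable one_ne_zero x) i
  have hmul : IntegrableOn (fun x => f x * lap g x) box :=
    integrableOn_box (hf.continuous.mul (continuous_lap hg))
  have hgrad : IntegrableOn (fun x => ∑ i, pd i f x * pd i g x) box :=
    integrableOn_box (continuous_finsetSum _ fun i _ =>
      (continuous_pd hf i).mul (hg' i).continuous)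
  simp only [hprod] at hdiv
  rw [← setIntegral_box_eq_Icc, integral_add hmul hgrad] at hdiv
  exact eq_neg_of_add_eq_zero_left hdiv

theorem integral_box_mul_lap_comm (hf : ContDiff ℝ 2 f) (hg : ContDiff ℝ 2 g)
    (pf : PeriodicSpace f) (pg : PeriodicSpace g) :
    ∫ x in box, f x * lap g x = ∫ x in box, g x * lap f x := by
  rw [integral_box_mul_lap (hf.of_le one_le_two) hg pf pg,
    integral_box_mul_lap (hg.of_le one_le_two) hf pg pf]
  simp only [mul_comm]

end Green

/-! ### Sobolev norms -/

/-- The integrand `g² + |∇g|²` of the squared `W^{1,2}` norm of a scalar field. -/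
noncomputable def sobDensityS (g : (Fin 3 → ℝ) → ℝ) (x : Fin 3 → ℝ) : ℝ :=
  g x ^ 2 + ∑ i, pd i g x ^ 2

/-- The integrand `|v|² + |∇v|²` of the squared `W^{1,2}` norm of a vector field. -/
noncomputable def sobDensityV (v : (Fin 3 → ℝ) → (Fin 3 → ℝ)) (x : Fin 3 → ℝ) : ℝ :=
  (∑ j, v x j ^ 2) + ∑ i, ∑ j, pd i (fun y => v y j) x ^ 2

section Sobolev

variable {f g : (Fin 3 → ℝ) → ℝ} {v : (Fin 3 → ℝ) → (Fin 3 → ℝ)} {x : Fin 3 → ℝ}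

theorem sobDensityS_nonneg : 0 ≤ sobDensityS g x := by
  unfold sobDensityS
  positivity

theorem sobDensityV_nonneg : 0 ≤ sobDensityV v x := by
  unfold sobDensityV
  positivity

theorem sobDensityS_le_sq {M : ℝ} (h : |g x| + √(∑ i, pd i g x ^ 2) ≤ M) :
    sobDensityS g x ≤ M ^ 2 :=
  add_le_sq_of_sqrt_add_sqrt_le (sq_nonneg _) (by positivity) (by rwa [Real.sqrt_sq_eq_abs])

theorem sobDensityV_le_sq {M : ℝ}
    (h : √(∑ j, v x j ^ 2) + √(∑ i, ∑ j, pd i (fun y => v y j) x ^ 2) ≤ M) :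
    sobDensityV v x ≤ M ^ 2 :=
  add_le_sq_of_sqrt_add_sqrt_le (by positivity) (by positivity) h

theorem continuous_sobDensityS (hg : ContDiff ℝ 1 g) : Continuous (sobDensityS g) :=
  (hg.continuous.pow 2).add (continuous_finsetSum _ fun i _ => (continuous_pd hg i).pow 2)

theorem continuous_sobDensityV (hv : ContDiff ℝ 1 v) : Continuous (sobDensityV v) :=
  have hv' : ∀ j, ContDiff ℝ 1 fun y => v y j := contDiff_pi.1 hv
  (continuous_finsetSum _ fun j _ => (hv' j).continuous.pow 2).add
    (continuous_finsetSum _ fun i _ => continuous_finsetSum _ fun j _ =>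
      (continuous_pd (hv' j) i).pow 2)

theorem sobNormS_sq (g : (Fin 3 → ℝ) → ℝ) : sobNormS g ^ 2 = ∫ x in box, sobDensityS g x :=
  Real.sq_sqrt (integral_nonneg fun _ => sobDensityS_nonneg)

theorem sobNormV_sq (v : (Fin 3 → ℝ) → (Fin 3 → ℝ)) :
    sobNormV v ^ 2 = ∫ x in box, sobDensityV v x :=
  Real.sq_sqrt (integral_nonneg fun _ => sobDensityV_nonneg)

theorem sobNormS_sq_eq_integral_mul (hg : ContDiff ℝ 2 g) (pg : PeriodicSpace g) :
    sobNormS g ^ 2 = ∫ x in box, g x * (g x - lap g x) := by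
  have hg₁ : ContDiff ℝ 1 g := hg.of_le one_le_two
  have hsq : IntegrableOn (fun x => g x ^ 2) box := integrableOn_box (hg.continuous.pow 2)
  have hgrad : IntegrableOn (fun x => ∑ i, pd i g x ^ 2) box :=
    integrableOn_box (continuous_finsetSum _ fun i _ => (continuous_pd hg₁ i).pow 2)
  have hmul : IntegrableOn (fun x => g x * lap g x) box :=
    integrableOn_box (hg.continuous.mul (continuous_lap hg))
  have hgreen := integral_box_mul_lap hg₁ hg pg pg
  simp only [← sq] at hgreen
  simp only [sobNormS_sq, sobDensityS, mul_sub, ← sq]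
  rw [integral_add hsq hgrad, integral_sub hsq hmul, hgreen, sub_neg_eq_add]

theorem sobNormS_sq_sub_sobNormS_sq (hf : ContDiff ℝ 2 f) (hg : ContDiff ℝ 2 g)
    (pf : PeriodicSpace f) (pg : PeriodicSpace g) :
    sobNormS f ^ 2 - sobNormS g ^ 2 =
      ∫ x in box, (f x - g x) * ((f x - lap f x) + (g x - lap g x)) := by
  have int_mul_lap : ∀ {a b : (Fin 3 → ℝ) → ℝ}, ContDiff ℝ 2 a → ContDiff ℝ 2 b →
      IntegrableOn (fun x => a x * lap b x) box := fun ha hb =>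
    integrableOn_box (ha.continuous.mul (continuous_lap hb))
  have int_mul_sub_lap : ∀ {a : (Fin 3 → ℝ) → ℝ}, ContDiff ℝ 2 a →
      IntegrableOn (fun x => a x * (a x - lap a x)) box := fun ha =>
    integrableOn_box (ha.continuous.mul (ha.continuous.sub (continuous_lap ha)))
  have hsymm : ∫ x in box, (g x * lap f x - f x * lap g x) = 0 := by
    rw [integral_sub (int_mul_lap hg hf) (int_mul_lap hf hg),
      integral_box_mul_lap_comm hf hg pf pg, sub_self]
  calc sobNormS f ^ 2 - sobNormS g ^ 2
      = ∫ x in box, (f x * (f x - lap f x) - g x * (g x - lap g x)) := by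
        rw [sobNormS_sq_eq_integral_mul hf pf, sobNormS_sq_eq_integral_mul hg pg,
          integral_sub (int_mul_sub_lap hf) (int_mul_sub_lap hg)]
    _ = (∫ x in box, (f x * (f x - lap f x) - g x * (g x - lap g x))) +
          ∫ x in box, (g x * lap f x - f x * lap g x) := by rw [hsymm, add_zero]
    _ = ∫ x in box, ((f x * (f x - lap f x) - g x * (g x - lap g x)) +
          (g x * lap f x - f x * lap g x)) :=
        (integral_add ((int_mul_sub_lap hf).sub (int_mul_sub_lap hg))
          ((int_mul_lap hg hf).sub (int_mul_lap hf hg))).symm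
    _ = ∫ x in box, (f x - g x) * ((f x - lap f x) + (g x - lap g x)) := by
        congr 1
        funext x
        ring

theorem divg_smul_sq_le (hg : DifferentiableAt ℝ g x) (hv : DifferentiableAt ℝ v x) :
    divg (fun y => g y • v y) x ^ 2 ≤ 3 * (sobDensityS g x * sobDensityV v x) := by
  have hterm : ∀ i, (pd i g x * v x i + g x * pd i (fun y => v y i) x) ^ 2 ≤
      sobDensityS g x * (v x i ^ 2 + pd i (fun y => v y i) x ^ 2) := by
    intro i
    have hi : g x ^ 2 + pd i g x ^ 2 ≤ sobDensityS g x :=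
      add_le_add_right (Finset.single_le_sum (f := fun i => pd i g x ^ 2)
        (fun _ _ => sq_nonneg _) (Finset.mem_univ i)) _
    calc _ ≤ (g x ^ 2 + pd i g x ^ 2) * (v x i ^ 2 + pd i (fun y => v y i) x ^ 2) := by
          nlinarith [sq_nonneg (g x * v x i - pd i g x * pd i (fun y => v y i) x)]
      _ ≤ _ := by gcongr
  have hdiag : ∑ i, (v x i ^ 2 + pd i (fun y => v y i) x ^ 2) ≤ sobDensityV v x := by
    rw [Finset.sum_add_distrib]
    exact add_le_add_right (Finset.sum_le_sum fun i _ => Finset.single_le_sum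
      (f := fun j => pd i (fun y => v y j) x ^ 2) (fun _ _ => sq_nonneg _) (Finset.mem_univ i)) _
  calc divg (fun y => g y • v y) x ^ 2
      = (∑ i, (pd i g x * v x i + g x * pd i (fun y => v y i) x)) ^ 2 := by rw [divg_smul hg hv]
    _ ≤ 3 * ∑ i, (pd i g x * v x i + g x * pd i (fun y => v y i) x) ^ 2 := by
        simpa using sq_sum_le_card_mul_sum_sq (s := Finset.univ)
          (f := fun i => pd i g x * v x i + g x * pd i (fun y => v y i) x)
    _ ≤ 3 * (sobDensityS g x * ∑ i, (v x i ^ 2 + pd i (fun y => v y i) x ^ 2)) := by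
        gcongr
        rw [Finset.mul_sum]
        exact Finset.sum_le_sum fun i _ => hterm i
    _ ≤ 3 * (sobDensityS g x * sobDensityV v x) := by
        gcongr
        exact sobDensityS_nonneg

end Sobolev

/-! ### Velocities and densities -/

theorem RegVel.sub {T : ℝ} {u₁ u₂ : ℝ → (Fin 3 → ℝ) → (Fin 3 → ℝ)}
    (h₁ : RegVel T u₁) (h₂ : RegVel T u₂) : RegVel T (u₁ - u₂) where
  periodic t ht := (h₁.periodic t ht).sub (h₂.periodic t ht)
  smoothSpace t ht := (h₁.smoothSpace t ht).sub (h₂.smoothSpace t ht)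
  cont0 := h₁.cont0.sub h₂.cont0
  cont1 i j := ((h₁.cont1 i j).sub (h₂.cont1 i j)).congr fun p hp =>
    congrFun (pd_sub ((contDiff_pi.1 (h₁.smoothSpace p.1 hp.1) j).differentiable two_ne_zero)
      ((contDiff_pi.1 (h₂.smoothSpace p.1 hp.1) j).differentiable two_ne_zero) i) p.2
  cont2 i j k := ((h₁.cont2 i j k).sub (h₂.cont2 i j k)).congr fun p hp =>
    congrFun (pd_pd_sub (contDiff_pi.1 (h₁.smoothSpace p.1 hp.1) k)
      (contDiff_pi.1 (h₂.smoothSpace p.1 hp.1) k) i j) p.2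

theorem RegDens.sub {T : ℝ} {ρ₁ ρ₂ : ℝ → (Fin 3 → ℝ) → ℝ}
    (h₁ : RegDens T ρ₁) (h₂ : RegDens T ρ₂) : RegDens T (ρ₁ - ρ₂) where
  periodic t ht := (h₁.periodic t ht).sub (h₂.periodic t ht)
  smoothSpace t ht := (h₁.smoothSpace t ht).sub (h₂.smoothSpace t ht)
  diffTime x t ht := (h₁.diffTime x t ht).sub (h₂.diffTime x t ht)
  cont0 := h₁.cont0.sub h₂.cont0
  contT := (h₁.contT.sub h₂.contT).congr fun p hp =>
    deriv_fun_sub (h₁.diffTime p.2 p.1 hp.1) (h₂.diffTime p.2 p.1 hp.1)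
  cont1 i := ((h₁.cont1 i).sub (h₂.cont1 i)).congr fun p hp =>
    congrFun (pd_sub ((h₁.smoothSpace p.1 hp.1).differentiable two_ne_zero)
      ((h₂.smoothSpace p.1 hp.1).differentiable two_ne_zero) i) p.2
  cont2 i j := ((h₁.cont2 i j).sub (h₂.cont2 i j)).congr fun p hp =>
    congrFun (pd_pd_sub (h₁.smoothSpace p.1 hp.1) (h₂.smoothSpace p.1 hp.1) i j) p.2

theorem RegVel.bddAbove_sobNormV {T : ℝ} {u : ℝ → (Fin 3 → ℝ) → (Fin 3 → ℝ)} (hu : RegVel T u) :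
    BddAbove (range fun t : Icc (0 : ℝ) T => sobNormV (u t)) := by
  have hcont : ContinuousOn (fun p : ℝ × (Fin 3 → ℝ) => sobDensityV (u p.1) p.2)
      (Icc 0 T ×ˢ univ) :=
    (continuousOn_finsetSum _ fun j _ => (continuousOn_pi.1 hu.cont0 j).pow 2).add
      (continuousOn_finsetSum _ fun i _ => continuousOn_finsetSum _ fun j _ =>
        (hu.cont1 i j).pow 2)
  obtain ⟨B, hB⟩ := (isCompact_Icc.prod isCompact_Icc).exists_bound_of_continuousOn
    (hcont.mono (prod_mono_right (subset_univ (Icc (0 : Fin 3 → ℝ) 1))))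
  refine ⟨√(B * volume.real (Icc (0 : Fin 3 → ℝ) 1)), ?_⟩
  rintro _ ⟨⟨t, ht⟩, rfl⟩
  refine Real.le_sqrt_of_sq_le ?_
  rw [sobNormV_sq, setIntegral_box_eq_Icc]
  exact (Real.le_norm_self _).trans (norm_setIntegral_le_of_norm_le_const
    isCompact_Icc.measure_lt_top fun x hx => hB (t, x) ⟨ht, hx⟩)

theorem RegDens.hasDerivWithinAt_sobNormS_sq {T : ℝ} {w : ℝ → (Fin 3 → ℝ) → ℝ}
    (hw : RegDens T w) {s : ℝ} (hs : s ∈ Icc (0 : ℝ) T) :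
    HasDerivWithinAt (fun t => sobNormS (w t) ^ 2)
      (∫ x in box, deriv (fun r => w r x) s * (2 * (w s x - lap (w s) x))) (Icc 0 T) s := by
  have hsub : Icc (0 : ℝ) T ×ˢ Icc (0 : Fin 3 → ℝ) 1 ⊆ Icc (0 : ℝ) T ×ˢ univ :=
    prod_mono_right (subset_univ _)
  have hlap : ContinuousOn (fun p : ℝ × (Fin 3 → ℝ) => w p.1 p.2 - lap (w p.1) p.2)
      (Icc 0 T ×ˢ univ) :=
    hw.cont0.sub (continuousOn_finsetSum _ fun i _ => hw.cont2 i i)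
  have hlap_s : Continuous fun x => w s x - lap (w s) x :=
    (hw.smoothSpace s hs).continuous.sub (continuous_lap (hw.smoothSpace s hs))
  have hlim := tendsto_setIntegral_slope_mul (μ := volume) (K := Icc (0 : Fin 3 → ℝ) 1)
    isCompact_Icc isCompact_Icc (convex_Icc 0 T) (f := w)
    (f' := fun t x => deriv (fun r => w r x) t)
    (g := fun t x => (w t x - lap (w t) x) + (w s x - lap (w s) x))
    (fun t ht => (hw.smoothSpace t ht).continuous.continuousOn)
    (fun x _ t ht => (hw.diffTime x t ht).hasDerivAt.hasDerivWithinAt)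
    (hw.contT.mono hsub) ((hlap.mono hsub).add (hlap_s.comp continuous_snd).continuousOn) hs
  rw [hasDerivWithinAt_iff_tendsto_slope]
  simp only [← setIntegral_box_eq_Icc, ← two_mul] at hlim
  refine hlim.congr' ?_
  filter_upwards [self_mem_nhdsWithin] with t ht
  rw [slope_def_field, sobNormS_sq_sub_sobNormS_sq (hw.smoothSpace t ht.1) (hw.smoothSpace s hs)
    (hw.periodic t ht.1) (hw.periodic s hs), ← integral_div]
  congr 1
  funext x
  rw [slope_def_field]
  ring

/-! ### The energy estimate -/

theorem divg_smul_sub_divg_smul_sq_le {M : ℝ} {r₁ r₂ : (Fin 3 → ℝ) → ℝ}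
    {v₁ v₂ : (Fin 3 → ℝ) → (Fin 3 → ℝ)} (hr₁ : Differentiable ℝ r₁) (hr₂ : Differentiable ℝ r₂)
    (hv₁ : Differentiable ℝ v₁) (hv₂ : Differentiable ℝ v₂) {x : Fin 3 → ℝ}
    (hbv₁ : sobDensityV v₁ x ≤ M ^ 2) (hbr₂ : sobDensityS r₂ x ≤ M ^ 2) :
    (divg (fun y => r₁ y • v₁ y) x - divg (fun y => r₂ y • v₂ y) x) ^ 2 ≤
      6 * M ^ 2 * (sobDensityS (r₁ - r₂) x + sobDensityV (v₁ - v₂) x) := by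
  have hsplit : divg (fun y => r₁ y • v₁ y) x - divg (fun y => r₂ y • v₂ y) x =
      divg (fun y => (r₁ - r₂) y • v₁ y) x + divg (fun y => r₂ y • (v₁ - v₂) y) x := by
    have hpd : ∀ i, pd i (fun y => (v₁ - v₂) y i) x =
        pd i (fun y => v₁ y i) x - pd i (fun y => v₂ y i) x := fun i =>
      congrFun (pd_sub (differentiable_pi.1 hv₁ i) (differentiable_pi.1 hv₂ i) i) x
    rw [divg_smul (hr₁ x) (hv₁ x), divg_smul (hr₂ x) (hv₂ x),
      divg_smul ((hr₁.sub hr₂) x) (hv₁ x), divg_smul (hr₂ x) ((hv₁.sub hv₂) x),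
      ← Finset.sum_sub_distrib, ← Finset.sum_add_distrib]
    refine Finset.sum_congr rfl fun i _ => ?_
    rw [hpd, pd_sub hr₁ hr₂]
    simp only [Pi.sub_apply]
    ring
  have hw := divg_smul_sq_le ((hr₁.sub hr₂) x) (hv₁ x)
  have hv := divg_smul_sq_le (hr₂ x) ((hv₁.sub hv₂) x)
  have hwM := mul_le_mul_of_nonneg_left hbv₁ (sobDensityS_nonneg (g := r₁ - r₂) (x := x))
  have hvM := mul_le_mul_of_nonneg_right hbr₂ (sobDensityV_nonneg (v := v₁ - v₂) (x := x))
  rw [hsplit]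
  linarith [add_sq_le (a := divg (fun y => (r₁ - r₂) y • v₁ y) x)
    (b := divg (fun y => r₂ y • (v₁ - v₂) y) x)]

theorem SolvesViscousContinuity.deriv_sub {ε T : ℝ} {u₁ u₂ : ℝ → (Fin 3 → ℝ) → (Fin 3 → ℝ)}
    {ρ₁ ρ₂ : ℝ → (Fin 3 → ℝ) → ℝ} (hsol₁ : SolvesViscousContinuity ε T ρ₁ u₁)
    (hsol₂ : SolvesViscousContinuity ε T ρ₂ u₂) (hρ₁ : RegDens T ρ₁) (hρ₂ : RegDens T ρ₂)
    {t : ℝ} (ht : t ∈ Ioo 0 T) (x : Fin 3 → ℝ) :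
    deriv (fun s => (ρ₁ - ρ₂) s x) t = ε * lap ((ρ₁ - ρ₂) t) x -
      (divg (fun y => ρ₁ t y • u₁ t y) x - divg (fun y => ρ₂ t y • u₂ t y) x) := by
  have ht' := Ioo_subset_Icc_self ht
  have hderiv : deriv (fun s => (ρ₁ - ρ₂) s x) t =
      deriv (fun s => ρ₁ s x) t - deriv (fun s => ρ₂ s x) t :=
    deriv_fun_sub (hρ₁.diffTime x t ht') (hρ₂.diffTime x t ht')
  rw [hderiv, Pi.sub_apply ρ₁, lap_sub (hρ₁.smoothSpace t ht') (hρ₂.smoothSpace t ht'),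
    Pi.sub_apply]
  linarith [hsol₁ t ht x, hsol₂ t ht x]

theorem integral_box_heat_energy_le {ε : ℝ} (hε : 0 < ε) {w F : (Fin 3 → ℝ) → ℝ}
    (hw : ContDiff ℝ 2 w) (pw : PeriodicSpace w) (hF : Continuous F) :
    ∫ x in box, (ε * lap w x - F x) * (2 * (w x - lap w x)) ≤
      ∫ x in box, (w x ^ 2 + (1 + 1 / (2 * ε)) * F x ^ 2) := by
  have hc := hw.continuous
  have hlap := continuous_lap hw
  have hdissipation : ∫ x in box, 2 * ε * (w x * lap w x) ≤ 0 := by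
    rw [integral_const_mul, integral_box_mul_lap (hw.of_le one_le_two) hw pw pw]
    refine mul_nonpos_of_nonneg_of_nonpos (by positivity) (neg_nonpos.2 ?_)
    exact integral_nonneg fun x => Finset.sum_nonneg fun i _ => mul_self_nonneg _
  have hyoung : ∀ x, 2 * (F x * lap w x) ≤ 1 / (2 * ε) * F x ^ 2 + 2 * ε * lap w x ^ 2 := by
    intro x
    have hsq : 1 / (2 * ε) * F x ^ 2 + 2 * ε * lap w x ^ 2 - 2 * (F x * lap w x) =
        1 / (2 * ε) * (F x - 2 * ε * lap w x) ^ 2 := by field_simp; ring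
    exact sub_nonneg.1 (hsq ▸ by positivity)
  calc ∫ x in box, (ε * lap w x - F x) * (2 * (w x - lap w x))
      ≤ ∫ x in box, (2 * ε * (w x * lap w x) + (w x ^ 2 + (1 + 1 / (2 * ε)) * F x ^ 2)) := by
        refine setIntegral_mono (integrableOn_box (by fun_prop)) (integrableOn_box (by fun_prop))
          fun x => ?_
        linarith [hyoung x, add_pow_two (F x) (w x), sq_nonneg (F x + w x)]
    _ = (∫ x in box, 2 * ε * (w x * lap w x)) +
          ∫ x in box, (w x ^ 2 + (1 + 1 / (2 * ε)) * F x ^ 2) :=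
        integral_add (integrableOn_box (by fun_prop)) (integrableOn_box (by fun_prop))
    _ ≤ _ := add_le_of_nonpos_left hdissipation

/-- The constant `K` in the differential inequality `E' ≤ K (E + D²)`: the flux difference `F`
enters it with the factor `1 + 1 / (2ε)` of `integral_box_heat_energy_le` and satisfies the bound
of `divg_smul_sub_divg_smul_sq_le`. -/
noncomputable def growthRate (ε M : ℝ) : ℝ := 1 + (1 + 1 / (2 * ε)) * (6 * M ^ 2)

theorem growthRate_nonneg {ε : ℝ} (hε : 0 ≤ ε) (M : ℝ) : 0 ≤ growthRate ε M := by
  unfold growthRate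
  positivity

theorem integral_box_heat_energy_le_growthRate {ε M : ℝ} (hε : 0 < ε) {w F : (Fin 3 → ℝ) → ℝ}
    {v : (Fin 3 → ℝ) → (Fin 3 → ℝ)} (hw : ContDiff ℝ 2 w) (pw : PeriodicSpace w)
    (hv : ContDiff ℝ 1 v) (hF : Continuous F)
    (hFM : ∀ x, F x ^ 2 ≤ 6 * M ^ 2 * (sobDensityS w x + sobDensityV v x)) :
    ∫ x in box, (ε * lap w x - F x) * (2 * (w x - lap w x)) ≤
      growthRate ε M * (sobNormS w ^ 2 + sobNormV v ^ 2) := by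
  have hc := hw.continuous
  have hS := continuous_sobDensityS (hw.of_le one_le_two)
  have hV := continuous_sobDensityV hv
  have hpointwise : ∀ x, w x ^ 2 + (1 + 1 / (2 * ε)) * F x ^ 2 ≤
      growthRate ε M * (sobDensityS w x + sobDensityV v x) := by
    intro x
    have hw_le : w x ^ 2 ≤ sobDensityS w x + sobDensityV v x :=
      (le_add_of_nonneg_right (by positivity)).trans
        (le_add_of_nonneg_right sobDensityV_nonneg)
    have hF_le := mul_le_mul_of_nonneg_left (hFM x) (by positivity : 0 ≤ 1 + 1 / (2 * ε))
    rw [growthRate]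
    linarith
  calc ∫ x in box, (ε * lap w x - F x) * (2 * (w x - lap w x))
      ≤ ∫ x in box, (w x ^ 2 + (1 + 1 / (2 * ε)) * F x ^ 2) :=
        integral_box_heat_energy_le hε hw pw hF
    _ ≤ ∫ x in box, growthRate ε M * (sobDensityS w x + sobDensityV v x) :=
        setIntegral_mono (integrableOn_box (by fun_prop)) (integrableOn_box (by fun_prop))
          hpointwise
    _ = growthRate ε M * (sobNormS w ^ 2 + sobNormV v ^ 2) := by
        rw [integral_const_mul, integral_add (integrableOn_box hS) (integrableOn_box hV),
          sobNormS_sq, sobNormV_sq]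

section Stability

variable {ε T M : ℝ} {u₁ u₂ : ℝ → (Fin 3 → ℝ) → (Fin 3 → ℝ)} {ρ₁ ρ₂ : ℝ → (Fin 3 → ℝ) → ℝ}

theorem integral_box_deriv_sub_le (hε : 0 < ε) (hu₁ : RegVel T u₁) (hu₂ : RegVel T u₂)
    (hρ₁ : RegDens T ρ₁) (hρ₂ : RegDens T ρ₂) (hsol₁ : SolvesViscousContinuity ε T ρ₁ u₁)
    (hsol₂ : SolvesViscousContinuity ε T ρ₂ u₂) {t : ℝ} (ht : t ∈ Ioo 0 T)
    (hbu₁ : ∀ x, sobDensityV (u₁ t) x ≤ M ^ 2) (hbρ₂ : ∀ x, sobDensityS (ρ₂ t) x ≤ M ^ 2) :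
    ∫ x in box, deriv (fun r => (ρ₁ - ρ₂) r x) t *
        (2 * ((ρ₁ - ρ₂) t x - lap ((ρ₁ - ρ₂) t) x)) ≤
      growthRate ε M * (sobNormS ((ρ₁ - ρ₂) t) ^ 2 + sobNormV ((u₁ - u₂) t) ^ 2) := by
  have ht' := Ioo_subset_Icc_self ht
  have hw := hρ₁.sub hρ₂
  have cu₁ := (hu₁.smoothSpace t ht').of_le one_le_two
  have cu₂ := (hu₂.smoothSpace t ht').of_le one_le_two
  have cρ₁ := (hρ₁.smoothSpace t ht').of_le one_le_two
  have cρ₂ := (hρ₂.smoothSpace t ht').of_le one_le_two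
  simp only [hsol₁.deriv_sub hsol₂ hρ₁ hρ₂ ht]
  exact integral_box_heat_energy_le_growthRate hε (hw.smoothSpace t ht') (hw.periodic t ht')
    (cu₁.sub cu₂) ((continuous_divg (cρ₁.smul cu₁)).sub (continuous_divg (cρ₂.smul cu₂)))
    fun x => divg_smul_sub_divg_smul_sq_le (cρ₁.differentiable one_ne_zero)
      (cρ₂.differentiable one_ne_zero) (cu₁.differentiable one_ne_zero)
      (cu₂.differentiable one_ne_zero) (hbu₁ x) (hbρ₂ x)

theorem sobNormS_sub_sq_le (hε : 0 < ε) (hu₁ : RegVel T u₁) (hu₂ : RegVel T u₂)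
    (hρ₁ : RegDens T ρ₁) (hρ₂ : RegDens T ρ₂) (hsol₁ : SolvesViscousContinuity ε T ρ₁ u₁)
    (hsol₂ : SolvesViscousContinuity ε T ρ₂ u₂) (hinit : ∀ x, ρ₁ 0 x = ρ₂ 0 x)
    (hbu₁ : ∀ t ∈ Icc 0 T, ∀ x, sobDensityV (u₁ t) x ≤ M ^ 2)
    (hbρ₂ : ∀ t ∈ Icc 0 T, ∀ x, sobDensityS (ρ₂ t) x ≤ M ^ 2)
    {D : ℝ} (hD : ∀ t ∈ Icc 0 T, sobNormV ((u₁ - u₂) t) ≤ D) {t : ℝ} (ht : t ∈ Icc 0 T) :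
    sobNormS ((ρ₁ - ρ₂) t) ^ 2 ≤ Real.exp (growthRate ε M * t) * D ^ 2 := by
  have hE := fun s hs => (hρ₁.sub hρ₂).hasDerivWithinAt_sobNormS_sq (s := s) hs
  have hE₀ : sobNormS ((ρ₁ - ρ₂) 0) ^ 2 = 0 := by
    have hw₀ : (ρ₁ - ρ₂) 0 = fun _ => 0 := funext fun x => sub_eq_zero.2 (hinit x)
    simp [hw₀, sobNormS, pd]
  have hgronwall := le_exp_mul_of_hasDerivAt_le (K := growthRate ε M)
    (f := fun s => sobNormS ((ρ₁ - ρ₂) s) ^ 2 + D ^ 2)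
    (fun s hs => ((hE s hs).add_const _).continuousWithinAt)
    (fun s hs => ((hE s (Ioo_subset_Icc_self hs)).hasDerivAt (Icc_mem_nhds hs.1 hs.2)).add_const _)
    (fun s hs => ?_) ht
  · rw [sub_zero, hE₀, zero_add] at hgronwall
    linarith [sq_nonneg D]
  · have hs' := Ioo_subset_Icc_self hs
    refine (integral_box_deriv_sub_le hε hu₁ hu₂ hρ₁ hρ₂ hsol₁ hsol₂ hs (hbu₁ s hs')
      (hbρ₂ s hs')).trans (mul_le_mul_of_nonneg_left ?_ (growthRate_nonneg hε.le M))
    gcongr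
    · exact Real.sqrt_nonneg _
    · exact hD s hs'

theorem viscous_continuity_stability_general (hε : 0 < ε) (hT : 0 ≤ T) (hu₁ : RegVel T u₁)
    (hu₂ : RegVel T u₂) (hρ₁ : RegDens T ρ₁) (hρ₂ : RegDens T ρ₂)
    (hsol₁ : SolvesViscousContinuity ε T ρ₁ u₁) (hsol₂ : SolvesViscousContinuity ε T ρ₂ u₂)
    (hinit : ∀ x, ρ₁ 0 x = ρ₂ 0 x) (hbu₁ : ∀ t ∈ Icc 0 T, ∀ x, sobDensityV (u₁ t) x ≤ M ^ 2)
    (hbρ₂ : ∀ t ∈ Icc 0 T, ∀ x, sobDensityS (ρ₂ t) x ≤ M ^ 2) :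
    (⨆ t : Icc (0 : ℝ) T, sobNormS (fun x => ρ₁ t x - ρ₂ t x)) ≤
      √(Real.exp (growthRate ε M * T)) *
        ⨆ t : Icc (0 : ℝ) T, sobNormV (fun x => u₁ t x - u₂ t x) := by
  have : Nonempty (Icc (0 : ℝ) T) := ⟨⟨0, left_mem_Icc.2 hT⟩⟩
  set D := ⨆ t : Icc (0 : ℝ) T, sobNormV (fun x => u₁ t x - u₂ t x)
  have hD : ∀ t ∈ Icc 0 T, sobNormV ((u₁ - u₂) t) ≤ D := fun t ht =>
    le_ciSup (hu₁.sub hu₂).bddAbove_sobNormV ⟨t, ht⟩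
  have hD₀ : 0 ≤ D := (Real.sqrt_nonneg _).trans (hD 0 (left_mem_Icc.2 hT))
  refine ciSup_le fun ⟨t, ht⟩ => ?_
  calc sobNormS ((ρ₁ - ρ₂) t) ≤ √(Real.exp (growthRate ε M * t) * D ^ 2) :=
        Real.le_sqrt_of_sq_le
          (sobNormS_sub_sq_le hε hu₁ hu₂ hρ₁ hρ₂ hsol₁ hsol₂ hinit hbu₁ hbρ₂ hD ht)
    _ = √(Real.exp (growthRate ε M * t)) * D := by
        rw [Real.sqrt_mul (Real.exp_pos _).le, Real.sqrt_sq hD₀]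
    _ ≤ √(Real.exp (growthRate ε M * T)) * D := by
        gcongr
        exacts [growthRate_nonneg hε.le M, ht.2]

end Stability

/-- Continuous dependence of the solution of the viscous continuity equation on the
transporting velocity field: with uniform `C²`/`C¹` bounds `M`, the `W^{1,2}(𝕋³)` distance
of two densities with the same initial datum is controlled, uniformly in time, by the
`W^{1,2}(𝕋³)` distance of the velocities, with a constant depending only on `ε, T, M`. -/
theorem viscous_continuity_stability
    (ε T M : ℝ) (hε : 0 < ε) (hT : 0 < T) (hM : 0 < M) :
    ∃ C : ℝ, ∀ (u₁ u₂ : ℝ → (Fin 3 → ℝ) → (Fin 3 → ℝ)) (ρ₁ ρ₂ : ℝ → (Fin 3 → ℝ) → ℝ),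
      RegVel T u₁ → RegVel T u₂ → RegDens T ρ₁ → RegDens T ρ₂ →
      SolvesViscousContinuity ε T ρ₁ u₁ → SolvesViscousContinuity ε T ρ₂ u₂ →
      (∀ x : Fin 3 → ℝ, ρ₁ 0 x = ρ₂ 0 x) →
      (∀ t ∈ Set.Icc (0:ℝ) T, ∀ x y : Fin 3 → ℝ,
        Real.sqrt (∑ j, u₁ t x j ^ 2)
          + Real.sqrt (∑ i, ∑ j, pd i (fun y' => u₁ t y' j) y ^ 2) ≤ M) →
      (∀ t ∈ Set.Icc (0:ℝ) T, ∀ x y : Fin 3 → ℝ,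
        Real.sqrt (∑ j, u₂ t x j ^ 2)
          + Real.sqrt (∑ i, ∑ j, pd i (fun y' => u₂ t y' j) y ^ 2) ≤ M) →
      (∀ t ∈ Set.Icc (0:ℝ) T, ∀ x y z : Fin 3 → ℝ,
        |ρ₁ t x| + Real.sqrt (∑ i, pd i (ρ₁ t) y ^ 2)
          + Real.sqrt (∑ i, ∑ j, pd i (pd j (ρ₁ t)) z ^ 2) ≤ M) →
      (∀ t ∈ Set.Icc (0:ℝ) T, ∀ x y z : Fin 3 → ℝ,
        |ρ₂ t x| + Real.sqrt (∑ i, pd i (ρ₂ t) y ^ 2)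
          + Real.sqrt (∑ i, ∑ j, pd i (pd j (ρ₂ t)) z ^ 2) ≤ M) →
      (⨆ t : Set.Icc (0:ℝ) T, sobNormS (fun x => ρ₁ ↑t x - ρ₂ ↑t x)) ≤
        C * ⨆ t : Set.Icc (0:ℝ) T, sobNormV (fun x => u₁ ↑t x - u₂ ↑t x) :=
  ⟨√(Real.exp (growthRate ε M * T)),
    fun _ _ _ _ hu₁ hu₂ hρ₁ hρ₂ hsol₁ hsol₂ hinit hbu₁ _ _ hbρ₂ =>
      viscous_continuity_stability_general hε hT.le hu₁ hu₂ hρ₁ hρ₂ hsol₁ hsol₂ hinit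
        (fun t ht x => sobDensityV_le_sq (hbu₁ t ht x x))
        (fun t ht x => sobDensityS_le_sq
          ((le_add_of_nonneg_right (Real.sqrt_nonneg _)).trans (hbρ₂ t ht x x x)))⟩
end
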